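/- arXiv:2312.16483 — 2 statements merged into one kernel-verified Lean document; each statement's English description precedes it below -/
import Mathlib

section
/- Let d, k be positive integers and let α ∈ ℕᵈ be a multi-index with ‖α‖₁ ≤ k. Then there exist real coefficients c_{n₂,…,n_{d+1}}, indexed by integers n₂, …, n_{d+1} ranging over {−⌊k/2⌋, …, k−⌊k/2⌋}, such that every coefficient satisfies |c_{n₂,…,n_{d+1}}| ≤ (k/2 + 1)^{2(d+1)}, and for all x ∈ ℝᵈ, x^α = Σ_{n₂,…,n_{d+1} = −⌊k/2⌋}^{k−⌊k/2⌋} c_{n₂,…,n_{d+1}} (x₁ + n₂x₂ + ⋯ + n_d x_d + n_{d+1})ᵏ. -/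
/-!
Homogenise by setting `x_{d+1} = 1` and complete `α` to a multi-index `γ` of total degree
exactly `k` on `d + 1` variables. If, for each `i ≠ 0`, weights `w i` on the nodes
`-⌊k/2⌋, …, k - ⌊k/2⌋` satisfy `∑ n, w i n * n ^ j = [j = γ i]` for all `j ≤ k`, then expanding
the `k`-th powers by the multinomial theorem shows that the tensor product weights
`∏ i, w i (ν i)` kill every monomial `y ^ β` with `|β| = k` except the one with `β i = γ i` for
all `i ≠ 0`; since `|β| = |γ|`, this forces `β = γ`. Dividing by the multinomial coefficient
gives the representation.

Such weights are the coefficients of `X ^ γ i` in the Lagrange basis polynomials of the `k + 1`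
nodes (`exists_moment_weights`). With `a = ⌊k/2⌋` and `b = k - a`, the coefficients of the basis
polynomial at the node `n` are at most
`∏ (1 + |j|) / ∏ |n - j| ≤ (a + 1)! (b + 1)! / ((a + n)! (b - n)!) ≤ (a + 1) (b + 1)`, because
the central binomial coefficient is maximal, and `(a + 1) (b + 1) ≤ (k / 2 + 1) ^ 2`
(`node_product_bound`).
-/

open Polynomial in
/-- Each factor of a Lagrange basis polynomial is of the form `C r * (X - C a)`, and multiplying
by it enlarges the maximal absolute value of the coefficients by at most `|r| * (1 + |a|)`. -/
lemma abs_coeff_basis_le (S : Finset ℤ) (v : ℤ → ℝ) (n : ℤ) (m : ℕ) :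
    |(∏ j ∈ S, Lagrange.basisDivisor (v n) (v j)).coeff m| ≤
      ∏ j ∈ S, (1 + |v j|) / |v n - v j| := by
  classical
  induction S using Finset.induction_on generalizing m with
  | empty =>
    simp only [Finset.prod_empty, coeff_one]
    split_ifs <;> simp
  | insert s S hs ih =>
    rw [Finset.prod_insert hs, Finset.prod_insert hs, Lagrange.basisDivisor, mul_assoc, coeff_C_mul,
      abs_mul, abs_inv, div_mul_eq_mul_div, div_eq_inv_mul]
    refine mul_le_mul_of_nonneg_left ?_ (by positivity)
    have h0 : 0 ≤ ∏ j ∈ S, (1 + |v j|) / |v n - v j| := Finset.prod_nonneg fun _ _ => by positivity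
    rw [sub_mul, coeff_sub, coeff_C_mul, add_mul, one_mul]
    refine (abs_sub _ _).trans (add_le_add ?_ ?_)
    · cases m with
      | zero => simpa using h0
      | succ m => simpa [coeff_X_mul] using ih m
    · rw [abs_mul]
      exact mul_le_mul_of_nonneg_left (ih m) (abs_nonneg _)

/-- A product over an integer interval with the point `n` removed splits into the products to the
left and to the right of `n`. -/
lemma prod_Icc_erase (f : ℤ → ℝ) (n : ℤ) (p q : ℕ) :
    ∏ j ∈ (Finset.Icc (n - p) (n + q)).erase n, f j =
      (∏ i ∈ Finset.range p, f (n - (i + 1))) * ∏ i ∈ Finset.range q, f (n + (i + 1)) := by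
  have h1 : (Finset.Icc (n - p) (n + q)).erase n =
      (Finset.range p).image (fun i : ℕ => n - ((i : ℤ) + 1)) ∪
        (Finset.range q).image (fun i : ℕ => n + ((i : ℤ) + 1)) := by
    ext j
    simp only [Finset.mem_erase, Finset.mem_Icc, Finset.mem_union, Finset.mem_image,
      Finset.mem_range]
    constructor
    · rintro ⟨h, h1, h2⟩
      rcases lt_or_gt_of_ne h with h | h
      · exact Or.inl ⟨(n - j - 1).toNat, by omega, by omega⟩
      · exact Or.inr ⟨(j - n - 1).toNat, by omega, by omega⟩
    · rintro (⟨i, hi, rfl⟩ | ⟨i, hi, rfl⟩) <;> omega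
  rw [h1, Finset.prod_union, Finset.prod_image, Finset.prod_image]
  · intro i _ j _ h
    simpa using h
  · intro i _ j _ h
    simpa using h
  · rw [Finset.disjoint_left]
    simp only [Finset.mem_image, Finset.mem_range]
    rintro _ ⟨i, _, rfl⟩ ⟨j, _, h⟩
    omega

lemma prod_abs_sub_node (n : ℤ) (p q : ℕ) :
    ∏ j ∈ (Finset.Icc (n - p) (n + q)).erase n, |(n : ℝ) - j| =
      (p.factorial : ℝ) * q.factorial := by
  rw [prod_Icc_erase (fun j => |(n : ℝ) - j|), ← Finset.prod_range_add_one_eq_factorial,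
    ← Finset.prod_range_add_one_eq_factorial]
  push_cast
  congr 1 <;> refine Finset.prod_congr rfl fun i _ => ?_
  · rw [sub_sub_cancel, abs_of_nonneg (by positivity)]
  · rw [sub_add_cancel_left, abs_neg, abs_of_nonneg (by positivity)]

lemma prod_one_add_abs (a b : ℕ) :
    ∏ j ∈ Finset.Icc (-(a : ℤ)) b, (1 + |(j : ℝ)|) =
      ((a + 1).factorial : ℝ) * (b + 1).factorial := by
  have h := prod_Icc_erase (fun j => 1 + |(j : ℝ)|) 0 a b
  rw [zero_sub, zero_add] at h
  rw [← Finset.mul_prod_erase _ _ (show (0 : ℤ) ∈ Finset.Icc (-(a : ℤ)) b by simp), h,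
    ← Finset.prod_range_add_one_eq_factorial, ← Finset.prod_range_add_one_eq_factorial,
    Finset.prod_range_succ', Finset.prod_range_succ']
  push_cast
  simp only [abs_zero, add_zero, one_mul, zero_add, mul_one, zero_sub, abs_neg]
  congr 1 <;> refine Finset.prod_congr rfl fun i _ => ?_ <;>
    · rw [abs_of_nonneg (by positivity)]
      ring

/-- Maximality of the central binomial coefficient, in terms of factorials. -/
lemma factorial_middle_le (k p q : ℕ) (h : p + q = k) :
    (k / 2).factorial * (k - k / 2).factorial ≤ p.factorial * q.factorial := by
  have h1 := Nat.choose_mul_factorial_mul_factorial (Nat.div_le_self k 2)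
  have h2 := Nat.choose_mul_factorial_mul_factorial (show p ≤ k by omega)
  have h3 := Nat.choose_le_middle p k
  rw [show k - p = q by omega] at h2
  have hpos : 0 < k.choose (k / 2) := Nat.choose_pos (Nat.div_le_self k 2)
  refine Nat.le_of_mul_le_mul_left ?_ hpos
  calc _ = k.choose p * (p.factorial * q.factorial) := by rw [← mul_assoc, h1, ← mul_assoc, h2]
    _ ≤ _ := Nat.mul_le_mul_right _ h3

/-- Bound on the coefficients of a Lagrange basis polynomial at the nodes `-⌊k/2⌋, …, k - ⌊k/2⌋`,
after `abs_coeff_basis_le`; the last step is the arithmetic-geometric mean inequality. -/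
lemma node_product_bound (k : ℕ) (n : ℤ)
    (hn : n ∈ Finset.Icc (-((k / 2 : ℕ) : ℤ)) ((k : ℤ) - ((k / 2 : ℕ) : ℤ))) :
    ∏ j ∈ (Finset.Icc (-((k / 2 : ℕ) : ℤ)) ((k : ℤ) - ((k / 2 : ℕ) : ℤ))).erase n,
      (1 + |(j : ℝ)|) / |(n : ℝ) - j| ≤ ((k : ℝ) / 2 + 1) ^ 2 := by
  have hn' := Finset.mem_Icc.1 hn
  obtain ⟨a, ha⟩ : ∃ a, a = k / 2 := ⟨_, rfl⟩
  obtain ⟨b, hb⟩ : ∃ b, b = k - k / 2 := ⟨_, rfl⟩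
  obtain ⟨p, hp⟩ : ∃ p : ℕ, (p : ℤ) = n + a := ⟨(n + a).toNat, by omega⟩
  obtain ⟨q, hq⟩ : ∃ q : ℕ, (q : ℤ) = b - n := ⟨(b - n).toNat, by omega⟩
  have hf := factorial_middle_le k p q (by omega)
  rw [← hb, ← ha] at hf
  rw [← ha, show (k : ℤ) - (a : ℤ) = b by omega] at hn ⊢
  have hden := prod_abs_sub_node n p q
  rw [show n - p = -(a : ℤ) by omega, show n + q = (b : ℤ) by omega] at hden
  have hnum : ∏ j ∈ (Finset.Icc (-(a : ℤ)) b).erase n, (1 + |(j : ℝ)|) ≤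
      ((a + 1).factorial : ℝ) * (b + 1).factorial := by
    rw [← prod_one_add_abs]
    exact Finset.prod_le_prod_of_subset_of_one_le (Finset.erase_subset _ _)
      (fun _ _ => by positivity) fun j _ _ => by simp
  rw [Finset.prod_div_distrib, hden, div_le_iff₀ (by positivity)]
  have hf' : (a.factorial : ℝ) * b.factorial ≤ p.factorial * q.factorial := by exact_mod_cast hf
  have hk : (k : ℝ) = a + b := by exact_mod_cast (show k = a + b by omega)
  have hab : ((a : ℝ) + 1) * (b + 1) ≤ ((k : ℝ) / 2 + 1) ^ 2 := by
    rw [hk]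
    nlinarith [sq_nonneg ((a : ℝ) - b)]
  calc _ ≤ ((a + 1).factorial : ℝ) * (b + 1).factorial := hnum
    _ = (((a : ℝ) + 1) * (b + 1)) * (a.factorial * b.factorial) := by
      rw [Nat.factorial_succ, Nat.factorial_succ]
      push_cast
      ring
    _ ≤ _ := mul_le_mul hab hf' (by positivity) (by positivity)

open Polynomial in
/-- Bounded weights on the integer nodes that extract the coefficient of `X ^ m` from every
polynomial of degree at most `k`. -/
lemma exists_moment_weights (k m : ℕ) :
    ∃ w : ℤ → ℝ, (∀ n, |w n| ≤ ((k : ℝ) / 2 + 1) ^ 2) ∧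
      ∀ j ≤ k, ∑ n ∈ Finset.Icc (-((k / 2 : ℕ) : ℤ)) ((k : ℤ) - ((k / 2 : ℕ) : ℤ)),
        w n * (n : ℝ) ^ j = if m = j then 1 else 0 := by
  set S := Finset.Icc (-((k / 2 : ℕ) : ℤ)) ((k : ℤ) - ((k / 2 : ℕ) : ℤ)) with hS
  refine ⟨fun n => if n ∈ S then (Lagrange.basis S (fun n : ℤ => (n : ℝ)) n).coeff m else 0,
    fun n => ?_, fun j hj => ?_⟩
  · dsimp only
    split_ifs with h
    · exact (abs_coeff_basis_le _ _ _ _).trans (node_product_bound k n h)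
    · rw [abs_zero]
      positivity
  · have hcard : S.card = k + 1 := by
      rw [hS, Int.card_Icc]
      omega
    have hinj : Set.InjOn (fun n : ℤ => (n : ℝ)) S := fun x _ y _ h => by simpa using h
    have hX : (X ^ j : ℝ[X]) =
        Lagrange.interpolate S (fun n : ℤ => (n : ℝ)) (fun n : ℤ => (n : ℝ) ^ j) := by
      refine Lagrange.eq_interpolate_of_eval_eq _ hinj ?_ fun i _ => by simp
      rw [degree_X_pow, hcard]
      exact_mod_cast Nat.lt_succ_of_le hj
    have h := congrArg (fun P : ℝ[X] => P.coeff m) hX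
    simp only [coeff_X_pow, Lagrange.interpolate_apply, finsetSum_coeff, coeff_C_mul] at h
    rw [h]
    exact Finset.sum_congr rfl fun n hn => by simp only [if_pos hn, mul_comm]


/-- for positive integers `d, k` and a multi-index `α ∈ ℕᵈ` with
`‖α‖₁ ≤ k`, there are coefficients `c_{n₂,…,n_{d+1}}` indexed by integer tuples
with entries in `{−⌊k/2⌋, …, k − ⌊k/2⌋}` (realized as functions `ν : Fin (d+1) → ℤ`
with `ν 0 = 1`, the coefficient of `x₁`; `ν` at the last index is the constant term
`n_{d+1}`), each bounded in absolute value by `(k/2 + 1)^{2(d+1)}`, such that for all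
`x ∈ ℝᵈ`, `x^α = Σ c (x₁ + n₂ x₂ + ⋯ + n_d x_d + n_{d+1})^k`. -/
theorem monomial_affine_representation (d k : ℕ) (hd : 0 < d) (hk : 0 < k)
    (α : Fin d → ℕ) (hα : ∑ i, α i ≤ k) :
    ∃ c : (Fin (d + 1) → ℤ) → ℝ,
      (∀ ν : Fin (d + 1) → ℤ, |c ν| ≤ ((k : ℝ) / 2 + 1) ^ (2 * (d + 1))) ∧
      ∀ x : Fin d → ℝ,
        ∏ i, x i ^ α i =
          ∑ ν ∈ Fintype.piFinset (fun i : Fin (d + 1) =>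
              if i = 0 then ({1} : Finset ℤ)
              else Finset.Icc (-((k / 2 : ℕ) : ℤ)) ((k : ℤ) - ((k / 2 : ℕ) : ℤ))),
            c ν * ((∑ i : Fin d, (ν i.castSucc : ℝ) * x i) + (ν (Fin.last d) : ℝ)) ^ k := by
  classical
  choose W hWb hW using exists_moment_weights k
  set γ : Fin (d + 1) → ℕ := Fin.snoc α (k - ∑ i, α i) with hγ
  have hγsum : ∑ i, γ i = k := by
    rw [Fin.sum_univ_castSucc]
    simp only [hγ, Fin.snoc_castSucc, Fin.snoc_last]
    omega
  set T : Fin (d + 1) → Finset ℤ := fun i => if i = 0 then ({1} : Finset ℤ)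
    else Finset.Icc (-((k / 2 : ℕ) : ℤ)) ((k : ℤ) - ((k / 2 : ℕ) : ℤ)) with hT
  set w : Fin (d + 1) → ℤ → ℝ := fun i => if i = 0 then fun _ => 1 else W (γ i) with hw
  have hwb : ∀ i n, |w i n| ≤ ((k : ℝ) / 2 + 1) ^ 2 := by
    intro i n
    simp only [hw]
    split_ifs
    · rw [abs_one]
      exact one_le_pow₀ (by linarith [show (0 : ℝ) ≤ k / 2 by positivity])
    · exact hWb _ _
  have hmom0 : ∀ j, ∑ n ∈ T 0, w 0 n * (n : ℝ) ^ j = 1 := by simp [hT, hw]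
  have hmom : ∀ i ≠ 0, ∀ j ≤ k, ∑ n ∈ T i, w i n * (n : ℝ) ^ j = if γ i = j then 1 else 0 := by
    intro i hi j hj
    simp only [hT, hw, if_neg hi]
    exact hW _ _ hj
  set M : ℕ := Nat.multinomial Finset.univ γ with hM
  have hMpos : 0 < M := Nat.multinomial_pos _ _
  refine ⟨fun ν => (∏ i, w i (ν i)) / M, fun ν => ?_, fun x => ?_⟩
  · rw [abs_div, Finset.abs_prod, Nat.abs_cast]
    have h1 : (1 : ℝ) ≤ M := by exact_mod_cast hMpos
    refine (div_le_self (Finset.prod_nonneg fun _ _ => abs_nonneg _) h1).trans ?_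
    refine (Finset.prod_le_prod (fun _ _ => abs_nonneg _) fun i _ => hwb i (ν i)).trans ?_
    rw [Finset.prod_const, Finset.card_univ, Fintype.card_fin, pow_mul]
  · set y : Fin (d + 1) → ℝ := Fin.snoc x 1 with hy
    have hprod : ∏ i, x i ^ α i = ∏ i, y i ^ γ i := by
      rw [Fin.prod_univ_castSucc]
      simp [hy, hγ]
    have hlin : ∀ ν : Fin (d + 1) → ℤ,
        (∑ i : Fin d, (ν i.castSucc : ℝ) * x i) + (ν (Fin.last d) : ℝ) =
          ∑ i, (ν i : ℝ) * y i := by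
      intro ν
      rw [Fin.sum_univ_castSucc]
      simp [hy]
    -- The tensor weights isolate the exponent `γ` among all exponents of total degree `k`.
    have hterm : ∀ β ∈ Finset.piAntidiag (Finset.univ : Finset (Fin (d + 1))) k,
        ∑ ν ∈ Fintype.piFinset T, (∏ i, w i (ν i)) * ∏ i, ((ν i : ℝ) * y i) ^ β i =
          if β = γ then ∏ i, y i ^ γ i else 0 := by
      intro β hβ
      have hβsum : ∑ i, β i = k := (Finset.mem_piAntidiag.1 hβ).1
      have hβle : ∀ i, β i ≤ k := fun i =>
        hβsum ▸ Finset.single_le_sum (fun _ _ => Nat.zero_le _) (Finset.mem_univ i)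
      have hfac : ∑ ν ∈ Fintype.piFinset T, (∏ i, w i (ν i)) * ∏ i, ((ν i : ℝ) * y i) ^ β i =
          ∏ i, (∑ n ∈ T i, w i n * (n : ℝ) ^ β i) * y i ^ β i := by
        simp only [Finset.sum_mul]
        rw [Finset.prod_univ_sum]
        refine Finset.sum_congr rfl fun ν _ => ?_
        rw [← Finset.prod_mul_distrib]
        exact Finset.prod_congr rfl fun i _ => by rw [mul_pow, mul_assoc]
      rw [hfac]
      split_ifs with h
      · subst h
        refine Finset.prod_congr rfl fun i _ => ?_
        by_cases hi : i = 0
        · rw [hi, hmom0, one_mul]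
        · rw [hmom i hi _ (hβle i), if_pos rfl, one_mul]
      · obtain ⟨i, hi, hne⟩ : ∃ i, i ≠ 0 ∧ γ i ≠ β i := by
          by_contra! hcon
          apply h
          -- Equal total degrees force agreement at the index `0` as well.
          have h0 : β 0 = γ 0 := by
            have hs := hβsum.trans hγsum.symm
            rw [Fin.sum_univ_succ, Fin.sum_univ_succ,
              Finset.sum_congr rfl fun i _ => hcon (Fin.succ i) (Fin.succ_ne_zero i)] at hs
            omega
          funext i
          by_cases hi : i = 0
          · rw [hi, h0]
          · exact (hcon i hi).symm
        refine Finset.prod_eq_zero (Finset.mem_univ i) ?_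
        rw [hmom i hi _ (hβle i), if_neg hne, zero_mul]
    have hγmem : γ ∈ Finset.piAntidiag (Finset.univ : Finset (Fin (d + 1))) k := by
      simp [Finset.mem_piAntidiag, hγsum]
    have hMne : (M : ℝ) ≠ 0 := by exact_mod_cast hMpos.ne'
    symm
    calc _ = ∑ ν ∈ Fintype.piFinset T,
          ∑ β ∈ Finset.piAntidiag (Finset.univ : Finset (Fin (d + 1))) k,
            (Nat.multinomial Finset.univ β : ℝ) / M *
              ((∏ i, w i (ν i)) * ∏ i, ((ν i : ℝ) * y i) ^ β i) := by
          refine Finset.sum_congr rfl fun ν _ => ?_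
          rw [hlin, Finset.sum_pow_eq_sum_piAntidiag, Finset.mul_sum]
          exact Finset.sum_congr rfl fun β _ => by ring
      _ = ∑ β ∈ Finset.piAntidiag (Finset.univ : Finset (Fin (d + 1))) k,
            (Nat.multinomial Finset.univ β : ℝ) / M *
              if β = γ then ∏ i, y i ^ γ i else 0 := by
          rw [Finset.sum_comm]
          refine Finset.sum_congr rfl fun β hβ => ?_
          rw [← Finset.mul_sum, hterm β hβ]
      _ = ∏ i, x i ^ α i := by
          rw [Finset.sum_eq_single_of_mem γ hγmem fun β _ h => by rw [if_neg h, mul_zero],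
            if_pos rfl, ← hM, div_self hMne, one_mul, hprod]
end

section
/- Let d, k, L be positive integers, B > 0, and set n₁ = ⋯ = n_L = 2(k^L + 1)ᵈ. Then any polynomial P(x) = Σ_{α ∈ ℕᵈ, ‖α‖₁ ≤ k^L} a_α x^α of degree at most k^L on the unit ball 𝔹ᵈ can be represented by a deep ReLUᵏ network of depth L with widths n₁, …, n_L: there exist matrices A₁ ∈ ℝ^{n₁×d}, A₂, …, A_L ∈ ℝ^{n_i×n_{i−1}}, bias vectors b₁, …, b_L, and an output vector c ∈ ℝ^{n_L}, with every entry of each A_i and b_i bounded in absolute value by B and ‖c‖_∞ ≤ M := B^{−k(k^L−1)/(k−1)} (k^L/2 + 1)^{2(d+1)+k^L} · (Σ_{‖α‖₁ ≤ k^L} |a_α|), such that the layers h₁(x) = σ_k(A₁x + b₁), h_{i+1}(x) = σ_k(A_{i+1} h_i(x) + b_{i+1}) satisfy c · h_L(x) = P(x) for all x ∈ 𝔹ᵈ. Moreover the matrices and vectors can be chosen so that the total number of nonzero parameters among A₁, …, A_L, b₁, …, b_L, c is at most 2(2L + d)(k^L + 1)ᵈ. -/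
/-!
Write `K = k^L`. The network consists of pairs of neurons: for a ridge function `v = w · x + 1` the
first layer carries `σ_k(B v)` and `σ_k(-B v)`, and every later layer multiplies by `B` and applies
`σ_k` neuron by neuron. Since `σ_k ∘ σ_m = σ_{mk}` and `σ_k` is positively homogeneous, the last
layer contains `B^(k + ⋯ + k^L) σ_K(±v)` (`deepLayers_diagonal`), and
`v^K = σ_K(v) + (-1)^K σ_K(-v)` (`relupow_add_neg`). The power of `B` is cancelled by the output
weights, and diagonal matrices keep the number of nonzero parameters small.

It remains to write the polynomial as `∑_J c_J (w_J · x + 1)^K` with `(K+1)^d` nodes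
`w_J ∈ [-1,1]^d` and small `c_J` (`exists_ridge`). The nodes form the tensor grid built from the
integers `-⌊K/2⌋, …, ⌈K/2⌉` divided by `⌈K/2⌉`. By the multinomial theorem, extracting the monomial
`x^α` means inverting a tensor product of Vandermonde matrices, so the weights are products of
coefficients of Lagrange basis polynomials at these integers. Such a coefficient is at most
`∏_{i ≠ j} (1 + |i - ⌊K/2⌋|) / (j! (K-j)!)`, hence at most
`(⌊K/2⌋ + 1)(⌈K/2⌉ + 1) ≤ (K/2 + 1)^2` (`exists_dual_weights`).
-/

open scoped Classical

/-- The ReLU^k activation function: `σ_k(x) = x^k` for `x ≥ 0` and `0` for `x < 0`. -/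
noncomputable def relupow (k : ℕ) (x : ℝ) : ℝ := if 0 ≤ x then x ^ k else 0

/-- The finite set of multi-indices `α ∈ ℕᵈ` with `‖α‖₁ = α₁ + ⋯ + α_d ≤ k`. -/
def degLE (d k : ℕ) : Finset (Fin d → ℕ) :=
  (Fintype.piFinset fun _ : Fin d => Finset.range (k + 1)).filter fun α => ∑ i, α i ≤ k

/-- Hidden layers of a fully-connected deep ReLU^k network of constant width `W` on `ℝᵈ`:
`deepLayers k d W A1 b1 A b m x = h_{m+1}(x)` where `h₁(x) = σ_k(A₁ x + b₁)` and
`h_{i+2}(x) = σ_k(A_{i+2} h_{i+1}(x) + b_{i+2})` (here `A i`, `b i` encode `A_{i+2}`, `b_{i+2}`). -/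
noncomputable def deepLayers (k d W : ℕ)
    (A1 : Matrix (Fin W) (Fin d) ℝ) (b1 : Fin W → ℝ)
    (A : ℕ → Matrix (Fin W) (Fin W) ℝ) (b : ℕ → Fin W → ℝ) :
    ℕ → (Fin d → ℝ) → (Fin W → ℝ)
  | 0, x, j => relupow k ((∑ i, A1 j i * x i) + b1 j)
  | m + 1, x, j =>
      relupow k ((∑ i, A m j i * deepLayers k d W A1 b1 A b m x i) + b m j)

/-- Number of nonzero entries of a matrix. -/
noncomputable def nnzM {p q : ℕ} (A : Matrix (Fin p) (Fin q) ℝ) : ℕ :=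
  (Finset.univ.filter fun ij : Fin p × Fin q => A ij.1 ij.2 ≠ 0).card

/-- Number of nonzero entries of a vector. -/
noncomputable def nnzV {p : ℕ} (v : Fin p → ℝ) : ℕ :=
  (Finset.univ.filter fun i : Fin p => v i ≠ 0).card

/-! ### Coefficients of Lagrange basis polynomials at centred integers -/

open Polynomial in
theorem abs_coeff_prod_X_sub_C_le {ι : Type*} (S : Finset ι) (v : ι → ℝ) (m : ℕ) :
    |(∏ i ∈ S, (X - C (v i))).coeff m| ≤ ∏ i ∈ S, (1 + |v i|) := by
  induction S using Finset.induction_on generalizing m with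
  | empty => 
    simp only [Finset.prod_empty, coeff_one]
    split_ifs <;> simp
  | insert a S ha ih =>
    rw [Finset.prod_insert ha, Finset.prod_insert ha, sub_mul, coeff_sub, coeff_C_mul]
    have h0 : 0 ≤ ∏ i ∈ S, (1 + |v i|) := Finset.prod_nonneg fun i _ => by positivity
    have h1 : |(X * ∏ i ∈ S, (X - C (v i))).coeff m| ≤ ∏ i ∈ S, (1 + |v i|) := by
      cases m with
      | zero => simpa using h0
      | succ m => rw [coeff_X_mul]; exact ih m
    refine (abs_sub _ _).trans ?_
    rw [abs_mul, add_mul, one_mul]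
    exact add_le_add h1 (mul_le_mul_of_nonneg_left (ih m) (abs_nonneg _))

theorem prod_one_add_abs_s5 (p q : ℕ) :
    ∏ i ∈ Finset.range (p + q + 1), (1 + |(i : ℝ) - p|) = ((p + 1).factorial : ℝ) * (q + 1).factorial := by
  induction q with
  | zero => 
    rw [← Finset.prod_range_reflect, add_zero, ← Finset.prod_range_add_one_eq_factorial]
    push_cast
    simp only [Nat.factorial_one, Nat.cast_one, mul_one]
    refine Finset.prod_congr rfl fun i hi => ?_
    have : i ≤ p := by simpa [Nat.lt_succ_iff] using hi
    rw [Nat.cast_sub this, abs_of_nonpos (by linarith [(Nat.cast_nonneg i : (0:ℝ) ≤ i)])]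
    ring
  | succ q ih =>
    rw [show p + (q + 1) + 1 = (p + q + 1) + 1 by ring, Finset.prod_range_succ, ih,
      Nat.factorial_succ (q + 1), abs_of_nonneg (by push_cast; linarith [(Nat.cast_nonneg q : (0:ℝ) ≤ q)])]
    push_cast; ring

/-- The denominator `∏_{i ≠ j} |j - i|` of the `j`-th Lagrange basis polynomial. -/
theorem prod_abs_sub (p q : ℕ) :
    ∏ i ∈ (Finset.range (p + q + 1)).erase p, |(p : ℝ) - i| = (p.factorial : ℝ) * q.factorial := by
  induction q with
  | zero => 
    rw [add_zero, Finset.range_add_one, Finset.erase_insert (by simp),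
      ← Finset.prod_range_reflect, ← Finset.prod_range_add_one_eq_factorial]
    push_cast
    simp only [Nat.factorial_zero, Nat.cast_one, mul_one]
    refine Finset.prod_congr rfl fun i hi => ?_
    have : i < p := by simpa using hi
    rw [show p - 1 - i = p - (i + 1) by omega, Nat.cast_sub (by omega)]
    push_cast
    rw [abs_of_nonneg (by linarith [(Nat.cast_nonneg i : (0:ℝ) ≤ i)])]
    ring
  | succ q ih =>
    rw [show p + (q + 1) + 1 = (p + q + 1) + 1 by ring, Finset.range_add_one, 
      Finset.erase_insert_of_ne (by omega), Finset.prod_insert (by simp), ih,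
      Nat.factorial_succ q, abs_of_nonpos (by push_cast; linarith [(Nat.cast_nonneg q : (0:ℝ) ≤ q)])]
    push_cast; ring

open Polynomial in
/-- Inverse of the Vandermonde matrix at the centred integer nodes `j - ⌊K/2⌋`, with an entrywise
bound. The weight `u j` is the coefficient of `X ^ m` in the `j`-th Lagrange basis polynomial; for
`m > K` all weights vanish. The bound reduces to `⌊K/2⌋! ⌈K/2⌉! ≤ j! (K - j)!`, the maximality of
the middle binomial coefficient. -/
theorem exists_dual_weights (K m : ℕ) :
    ∃ u : Fin (K + 1) → ℝ, (∀ j, |u j| ≤ ((K : ℝ) / 2 + 1) ^ 2) ∧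
      ∀ m' ≤ K, ∑ j, u j * ((j : ℝ) - (K / 2 : ℕ)) ^ m' = if m' = m then 1 else 0 := by
  set g := K / 2 with hg
  let v : ℕ → ℝ := fun i => (i : ℝ) - g
  have hinj : Set.InjOn v (Finset.range (K + 1)) := fun i _ j _ h => by
    simpa [v] using h
  refine ⟨fun j => (Lagrange.basis (Finset.range (K + 1)) v j).coeff m, fun j => ?_, fun m' hm' => ?_⟩
  · have hj : (j : ℕ) ≤ K := Nat.lt_succ_iff.1 j.2
    obtain ⟨q, hq⟩ := Nat.exists_eq_add_of_le hj
    obtain ⟨r, hr⟩ : ∃ r, K = g + r := Nat.exists_eq_add_of_le (Nat.div_le_self K 2)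
    have hden : ∏ i ∈ (Finset.range (K + 1)).erase (j : ℕ), |v j - v i|
        = ((j : ℕ).factorial : ℝ) * q.factorial := by
      rw [← prod_abs_sub, ← hq]
      exact Finset.prod_congr rfl fun i _ => by simp [v]
    have hnum : ∏ i ∈ (Finset.range (K + 1)).erase (j : ℕ), (1 + |v i|)
        ≤ ((g + 1).factorial : ℝ) * (r + 1).factorial := by
      rw [← prod_one_add_abs_s5, ← hr]
      rw [← Finset.mul_prod_erase _ _ (Finset.mem_range.2 j.2)]
      exact le_mul_of_one_le_left (Finset.prod_nonneg fun i _ => by positivity) (by simp)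
    have hchoose : (g.factorial : ℝ) * r.factorial ≤ ((j : ℕ).factorial : ℝ) * q.factorial := by
      have h1 := Nat.choose_le_middle j K
      have h2 := Nat.choose_mul_factorial_mul_factorial hj
      have h3 := Nat.choose_mul_factorial_mul_factorial (Nat.div_le_self K 2)
      rw [← hg] at h1 h3
      rw [show K - j = q by omega] at h2
      rw [show K - g = r by omega] at h3
      have hpos : 0 < K.choose g := Nat.choose_pos (Nat.div_le_self K 2)
      have : K.choose g * (g.factorial * r.factorial) ≤ K.choose g * ((j : ℕ).factorial * q.factorial) := by
        calc _ = K.choose j * ((j : ℕ).factorial * q.factorial) := by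
              rw [← mul_assoc, ← mul_assoc, h2, h3]
          _ ≤ _ := Nat.mul_le_mul_right _ h1
      exact_mod_cast Nat.le_of_mul_le_mul_left this hpos
    have hbasis : Lagrange.basis (Finset.range (K + 1)) v j =
        C (∏ i ∈ (Finset.range (K + 1)).erase (j : ℕ), (v j - v i))⁻¹ *
          ∏ i ∈ (Finset.range (K + 1)).erase (j : ℕ), (X - C (v i)) := by
      simp only [Lagrange.basis, Lagrange.basisDivisor, Finset.prod_mul_distrib]
      rw [← map_prod, Finset.prod_inv_distrib]
    have hpos : (0 : ℝ) < ((j : ℕ).factorial : ℝ) * q.factorial := by positivity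
    simp only [hbasis, coeff_C_mul, abs_mul, abs_inv, Finset.abs_prod]
    rw [hden, inv_mul_le_iff₀ hpos]
    refine (abs_coeff_prod_X_sub_C_le _ _ _).trans (hnum.trans ?_)
    rw [Nat.factorial_succ, Nat.factorial_succ]
    push_cast
    calc ((g : ℝ) + 1) * g.factorial * ((r + 1) * r.factorial)
        = (g.factorial * r.factorial) * ((g + 1) * (r + 1)) := by ring
      _ ≤ _ := by
        refine mul_le_mul hchoose ?_ (by positivity) hpos.le
        have : (K : ℝ) = g + r := by exact_mod_cast hr
        rw [this]
        -- AM-GM for `g + 1` and `r + 1`, whose sum is `K + 2`.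
        nlinarith [sq_nonneg ((g : ℝ) - r)]
  -- Compare coefficients of `X ^ m` in `X ^ m' = ∑ j, v j ^ m' • ℓ_j`, which is exact for `m' ≤ K`.
  · have hdeg : ((X : ℝ[X]) ^ m').degree < (Finset.range (K + 1)).card := by
      rw [degree_X_pow, Finset.card_range]
      exact_mod_cast Nat.lt_succ_of_le hm'
    have h := congrArg (fun p : ℝ[X] => p.coeff m) (Lagrange.eq_interpolate hinj hdeg)
    simp only [Lagrange.interpolate_apply, finsetSum_coeff, coeff_C_mul, eval_pow, eval_X,
      coeff_X_pow] at h
    rw [Fin.sum_univ_eq_sum_range (fun j => (Lagrange.basis (Finset.range (K + 1)) v j).coeff m * ((j : ℝ) - g) ^ m')]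
    simp only [eq_comm (a := m'), h]
    exact Finset.sum_congr rfl fun i _ => mul_comm _ _

/-- Multinomial expansion of `(1 + ∑ yᵢ)^K`: every monomial of degree at most `K` occurs, and the
only property of the coefficients needed is that they are at least `1`. -/
theorem one_add_sum_pow (d K : ℕ) : ∃ M : (Fin d → ℕ) → ℝ, (∀ α ∈ degLE d K, 1 ≤ M α) ∧
    ∀ y : Fin d → ℝ, (1 + ∑ i, y i) ^ K = ∑ α ∈ degLE d K, M α * ∏ i, y i ^ α i := by
  have hmem : ∀ α, α ∈ degLE d K ↔ ∑ i, α i ≤ K := fun α => by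
    simp only [degLE, Finset.mem_filter, Fintype.mem_piFinset, Finset.mem_range, Nat.lt_succ_iff,
      and_iff_right_iff_imp]
    exact fun h i => (Finset.single_le_sum (fun _ _ => Nat.zero_le _) (Finset.mem_univ i)).trans h
  refine ⟨fun α => (K.choose (∑ i, α i) * Nat.multinomial Finset.univ α : ℕ), fun α hα => ?_,
    fun y => ?_⟩
  · have h1 : 0 < K.choose (∑ i, α i) := Nat.choose_pos ((hmem α).1 hα)
    have h2 : 0 < Nat.multinomial Finset.univ α := Nat.multinomial_pos _ _
    exact Nat.one_le_cast.2 (Nat.mul_pos h1 h2)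
  · rw [add_comm, add_pow, ← Finset.sum_fiberwise_of_maps_to (s := degLE d K) (t := Finset.range (K + 1))
      (g := fun α => ∑ i, α i) (fun α hα => Finset.mem_range.2 (Nat.lt_succ_of_le ((hmem α).1 hα)))]
    refine Finset.sum_congr rfl fun n hn => ?_
    have hn' : n ≤ K := Nat.lt_succ_iff.1 (Finset.mem_range.1 hn)
    have : (degLE d K).filter (fun α => ∑ i, α i = n) = Finset.piAntidiag Finset.univ n := by
      ext α
      simp only [Finset.mem_filter, hmem, Finset.mem_piAntidiag]
      constructor
      · rintro ⟨-, h⟩; exact ⟨h, by simp⟩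
      · rintro ⟨h, -⟩; exact ⟨h.le.trans hn', h⟩
    rw [this, Finset.sum_pow_eq_sum_piAntidiag, one_pow, mul_one, Finset.sum_mul]
    refine Finset.sum_congr rfl fun α hα => ?_
    have hα' : ∑ i, α i = n := (Finset.mem_piAntidiag.1 hα).1
    simp only [hα']
    push_cast; ring

/-! ### Polynomials as combinations of ridge powers -/

/-- Every polynomial of degree at most `K` is a combination of the `(K+1)^d` ridge powers
`(w_J · x + 1)^K` with `w_J` on a tensor grid in `[-1,1]^d`, with explicitly bounded coefficients.
The one-dimensional weights of `exists_dual_weights` are tensorised: each of the `d` factors costs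
`(K/2+1)^2`, and rescaling the integer grid to `[-1,1]^d` costs at most `(K/2+1)^K`. -/
theorem exists_ridge (d K : ℕ) (hK : 0 < K) (a : (Fin d → ℕ) → ℝ) :
    ∃ (w : (Fin d → Fin (K + 1)) → Fin d → ℝ) (c : (Fin d → Fin (K + 1)) → ℝ),
      (∀ J i, |w J i| ≤ 1) ∧
      (∀ J, |c J| ≤ ((K : ℝ) / 2 + 1) ^ (2 * (d + 1) + K) * ∑ α ∈ degLE d K, |a α|) ∧
      ∀ x : Fin d → ℝ, ∑ α ∈ degLE d K, a α * ∏ i, x i ^ α i =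
        ∑ J, c J * (∑ i, w J i * x i + 1) ^ K := by
  have hle : ∀ α ∈ degLE d K, ∀ i, α i ≤ K := fun α hα i => by
    have := Fintype.mem_piFinset.1 (Finset.mem_filter.1 hα).1 i
    exact Nat.lt_succ_iff.1 (Finset.mem_range.1 this)
  have hsum : ∀ α ∈ degLE d K, ∑ i, α i ≤ K := fun α hα => (Finset.mem_filter.1 hα).2
  obtain ⟨M, hM, hexp⟩ := one_add_sum_pow d K
  choose u hu hdual using exists_dual_weights K
  set g : ℕ := K / 2 with hg
  obtain ⟨r, hr⟩ : ∃ r, K = g + r := Nat.exists_eq_add_of_le (Nat.div_le_self K 2)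
  -- `r = ⌈K/2⌉` is the largest node in absolute value, so dividing by it gives weights in `[-1,1]`.
  have hr1 : 1 ≤ r := by omega
  have hgr : g ≤ r := by omega
  have hrK : (r : ℝ) ≤ (K : ℝ) / 2 + 1 := by
    have : 2 * r ≤ K + 2 := by omega
    have : (2 : ℝ) * r ≤ K + 2 := by exact_mod_cast this
    linarith
  have hr0 : (0 : ℝ) < r := by exact_mod_cast hr1
  have hb1 : (1 : ℝ) ≤ (K : ℝ) / 2 + 1 := by
    have : (0 : ℝ) ≤ K := Nat.cast_nonneg K
    linarith
  refine ⟨fun J i => (((J i : ℕ) : ℝ) - g) / r,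
    fun J => ∑ α ∈ degLE d K, a α * ((r : ℝ) ^ (∑ i, α i) / M α * ∏ i, u (α i) (J i)), ?_, ?_, ?_⟩
  · intro J i
    rw [abs_div, abs_of_pos hr0, div_le_one hr0, abs_le]
    have h0 : (J i : ℕ) ≤ g + r := by have := (J i).2; omega
    have h1 : ((J i : ℕ) : ℝ) ≤ g + r := by exact_mod_cast h0
    have h2 : (g : ℝ) ≤ r := by exact_mod_cast hgr
    have h3 : (0 : ℝ) ≤ ((J i : ℕ) : ℝ) := Nat.cast_nonneg _
    constructor <;> linarith
  · intro J
    refine (Finset.abs_sum_le_sum_abs _ _).trans ?_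
    rw [Finset.mul_sum]
    refine Finset.sum_le_sum fun α hα => ?_
    rw [abs_mul, mul_comm]
    refine mul_le_mul_of_nonneg_right ?_ (abs_nonneg _)
    rw [abs_mul, Finset.abs_prod, abs_div, abs_of_pos (lt_of_lt_of_le one_pos (hM α hα)),
      abs_of_pos (pow_pos hr0 _)]
    have h1 : (r : ℝ) ^ (∑ i, α i) / M α ≤ ((K : ℝ) / 2 + 1) ^ K :=
      calc _ ≤ (r : ℝ) ^ (∑ i, α i) := div_le_self (by positivity) (hM α hα)
        _ ≤ ((K : ℝ) / 2 + 1) ^ (∑ i, α i) := by gcongr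
        _ ≤ _ := pow_le_pow_right₀ hb1 (hsum α hα)
    have h2 : ∏ i, |u (α i) (J i)| ≤ (((K : ℝ) / 2 + 1) ^ 2) ^ d := by
      refine (Finset.prod_le_prod (fun i _ => abs_nonneg _)
        (fun i _ => hu (α i) (J i))).trans ?_
      simp
    calc _ ≤ ((K : ℝ) / 2 + 1) ^ K * (((K : ℝ) / 2 + 1) ^ 2) ^ d :=
          mul_le_mul h1 h2 (Finset.prod_nonneg fun i _ => abs_nonneg _) (by positivity)
      _ = ((K : ℝ) / 2 + 1) ^ (K + 2 * d) := by rw [← pow_mul, ← pow_add]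
      _ ≤ _ := pow_le_pow_right₀ hb1 (by omega)
  · intro x
    -- Tensorised duality: the weights of `α` annihilate every other monomial of the grid.
    have key : ∀ α ∈ degLE d K, ∀ β ∈ degLE d K,
        ∑ J : Fin d → Fin (K + 1), (∏ i, u (α i) (J i)) *
          ∏ i, ((((J i : ℕ) : ℝ) - g) / r * x i) ^ β i =
        if β = α then ∏ i, (x i / r) ^ α i else 0 := by
      intro α hα β hβ
      have h1 : ∀ J : Fin d → Fin (K + 1), (∏ i, u (α i) (J i)) *
          ∏ i, ((((J i : ℕ) : ℝ) - g) / r * x i) ^ β i =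
          ∏ i, ((u (α i) (J i) * (((J i : ℕ) : ℝ) - g) ^ β i) * (x i / r) ^ β i) := fun J => by
        rw [← Finset.prod_mul_distrib]
        refine Finset.prod_congr rfl fun i _ => ?_
        rw [div_mul_eq_mul_div, mul_div_assoc, mul_pow]; ring
      rw [Finset.sum_congr rfl fun J _ => h1 J,
        ← Fintype.prod_sum (fun i (j : Fin (K + 1)) =>
          (u (α i) j * ((j : ℝ) - g) ^ β i) * (x i / r) ^ β i)]
      simp only [← Finset.sum_mul]
      rw [Finset.prod_congr rfl fun i _ => by
        rw [hdual (α i) (β i) (hle β hβ i)]]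
      split_ifs with h
      · subst h; simp
      · obtain ⟨i, hi⟩ := Function.ne_iff.1 h
        exact Finset.prod_eq_zero (Finset.mem_univ i) (by simp [hi])
    have h2 : ∀ J : Fin d → Fin (K + 1),
        (∑ i, (((J i : ℕ) : ℝ) - g) / r * x i + 1) ^ K =
        ∑ β ∈ degLE d K, M β * ∏ i, ((((J i : ℕ) : ℝ) - g) / r * x i) ^ β i := fun J => by
      rw [add_comm, hexp]
    simp only [h2, Finset.sum_mul]
    rw [Finset.sum_comm]
    refine Finset.sum_congr rfl fun α hα => ?_
    have h3 : ∀ J : Fin d → Fin (K + 1),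
        a α * ((r : ℝ) ^ (∑ i, α i) / M α * ∏ i, u (α i) (J i)) *
          ∑ β ∈ degLE d K, M β * ∏ i, ((((J i : ℕ) : ℝ) - g) / r * x i) ^ β i =
        ∑ β ∈ degLE d K, a α * ((r : ℝ) ^ (∑ i, α i) / M α) * M β * ((∏ i, u (α i) (J i)) *
          ∏ i, ((((J i : ℕ) : ℝ) - g) / r * x i) ^ β i) := fun J => by
      rw [Finset.mul_sum]
      exact Finset.sum_congr rfl fun β _ => by ring
    rw [Finset.sum_congr rfl fun J _ => h3 J, Finset.sum_comm]
    simp only [← Finset.mul_sum]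
    rw [Finset.sum_congr rfl fun β hβ => by rw [key α hα β hβ]]
    simp only [mul_ite, mul_zero, Finset.sum_ite_eq', hα, if_true, div_pow,
      Finset.prod_div_distrib, Finset.prod_pow_eq_pow_sum]
    have := lt_of_lt_of_le one_pos (hM α hα)
    field_simp

/-! ### Diagonal ReLU^k networks -/

theorem relupow_mul {k : ℕ} {c : ℝ} (hc : 0 ≤ c) (v : ℝ) (hk : 0 < k) :
    relupow k (c * v) = c ^ k * relupow k v := by
  rcases hc.eq_or_lt with rfl | hc
  · simp [relupow, hk.ne']
  · simp only [relupow, mul_nonneg_iff_of_pos_left hc]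
    split_ifs <;> simp [mul_pow]

theorem relupow_relupow {m k : ℕ} (hk : 0 < k) (v : ℝ) :
    relupow k (relupow m v) = relupow (m * k) v := by
  by_cases hv : 0 ≤ v
  · simp [relupow, hv, pow_nonneg hv, pow_mul]
  · simp [relupow, hv, hk.ne']

/-- A power, of either parity, is recovered from its two one-sided parts. -/
theorem relupow_add_neg {K : ℕ} (hK : 0 < K) (v : ℝ) :
    relupow K v + (-1) ^ K * relupow K (-v) = v ^ K := by
  rcases lt_trichotomy v 0 with h | rfl | h
  · rw [relupow, relupow, if_neg (not_le.2 h), if_pos (by linarith), ← mul_pow]; simp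
  · simp [relupow, hK.ne']
  · rw [relupow, relupow, if_pos h.le, if_neg (by linarith)]; simp

/-- With every later matrix equal to `B • 1` and zero biases, each neuron evolves on its own: `m + 1`
layers compose to the single activation `σ_{k^(m+1)}`, and the scalings collect into
`B^(k + k² + ⋯ + k^(m+1))`. -/
theorem deepLayers_diagonal (k d W : ℕ) (hk : 0 < k) {B : ℝ} (hB : 0 ≤ B)
    (w : Fin W → Fin d → ℝ) (t : Fin W → ℝ) (m : ℕ) (x : Fin d → ℝ) (p : Fin W) :
    deepLayers k d W (fun p i => B * w p i) (fun p => B * t p)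
      (fun _ => Matrix.diagonal fun _ => B) (fun _ _ => 0) m x p =
      B ^ (∑ i ∈ Finset.range (m + 1), k ^ (i + 1)) *
        relupow (k ^ (m + 1)) (∑ i, w p i * x i + t p) := by
  induction m with
  | zero =>
    simp only [deepLayers, mul_assoc, ← Finset.mul_sum, ← mul_add]
    rw [relupow_mul hB _ hk]; simp
  | succ m ih =>
    simp only [deepLayers, Matrix.diagonal_apply, ite_mul, zero_mul, Finset.sum_ite_eq,
      Finset.mem_univ, if_true, add_zero, ih]
    rw [← mul_assoc, relupow_mul (by positivity) _ hk, relupow_relupow hk, ← pow_succ,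
      ← pow_succ', ← pow_mul, Finset.sum_range_succ' _ (m + 1)]
    congr 2
    rw [add_mul, Finset.sum_mul]
    simp [pow_succ]

/-! ### Parameter counts -/

theorem nnzM_le (p q : ℕ) (A : Matrix (Fin p) (Fin q) ℝ) : nnzM A ≤ p * q :=
  (Finset.card_filter_le _ _).trans (by simp)

theorem nnzV_le (p : ℕ) (v : Fin p → ℝ) : nnzV v ≤ p :=
  (Finset.card_filter_le _ _).trans (by simp)

theorem nnzM_diagonal_le (p : ℕ) (v : Fin p → ℝ) : nnzM (Matrix.diagonal v) ≤ p := by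
  refine (Finset.card_le_card_of_injOn (t := Finset.univ) Prod.fst (by simp) ?_).trans (by simp)
  rintro ⟨i, j⟩ hi ⟨i', j'⟩ hi' h
  simp only [Finset.coe_filter, Set.mem_ofPred_eq, Finset.mem_univ, true_and] at hi hi' h
  have h1 : i = j := by_contra fun h => hi (Matrix.diagonal_apply_ne _ h)
  have h2 : i' = j' := by_contra fun h => hi' (Matrix.diagonal_apply_ne _ h)
  simp [← h1, ← h2, h]

/-- any polynomial of degree at most `k^L` on the unit ball `𝔹ᵈ` can be
represented by a deep ReLU^k network of depth `L` and widths `n₁ = ⋯ = n_L = 2(k^L+1)ᵈ`,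
with all inner weights and biases bounded by `B`, outer weights bounded by
`M = B^{−(k + k² + ⋯ + k^L)} (k^L/2 + 1)^{2(d+1)+k^L} Σ|a_α|` (note
`k + ⋯ + k^L = k(k^L−1)/(k−1)`), and at most `2(2L+d)(k^L+1)ᵈ` nonzero parameters. -/
theorem deep_relupow_represents_polynomials (d k L : ℕ)
    (hd : 0 < d) (hk : 0 < k) (hL : 0 < L) (B : ℝ) (hB : 0 < B)
    (a : (Fin d → ℕ) → ℝ) :
    ∃ (A1 : Matrix (Fin (2 * (k ^ L + 1) ^ d)) (Fin d) ℝ)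
      (b1 : Fin (2 * (k ^ L + 1) ^ d) → ℝ)
      (A : ℕ → Matrix (Fin (2 * (k ^ L + 1) ^ d)) (Fin (2 * (k ^ L + 1) ^ d)) ℝ)
      (b : ℕ → Fin (2 * (k ^ L + 1) ^ d) → ℝ)
      (c : Fin (2 * (k ^ L + 1) ^ d) → ℝ),
      (∀ i j, |A1 i j| ≤ B) ∧ (∀ i, |b1 i| ≤ B) ∧
      (∀ m, m < L - 1 → (∀ i j, |A m i j| ≤ B) ∧ (∀ i, |b m i| ≤ B)) ∧
      (∀ j, |c j| ≤
        (B ^ (∑ i ∈ Finset.range L, k ^ (i + 1)))⁻¹ *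
          (((k ^ L : ℕ) : ℝ) / 2 + 1) ^ (2 * (d + 1) + k ^ L) *
          ∑ α ∈ degLE d (k ^ L), |a α|) ∧
      (nnzM A1 + nnzV b1 +
          (∑ m ∈ Finset.range (L - 1), (nnzM (A m) + nnzV (b m))) + nnzV c
        ≤ 2 * (2 * L + d) * (k ^ L + 1) ^ d) ∧
      ∀ x : Fin d → ℝ, (∑ i, (x i) ^ 2 ≤ 1) →
        ∑ α ∈ degLE d (k ^ L), a α * ∏ i, x i ^ α i =
          ∑ j, c j * deepLayers k d (2 * (k ^ L + 1) ^ d) A1 b1 A b (L - 1) x j := by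
  set K := k ^ L with hKdef
  have hK : 0 < K := pow_pos hk L
  obtain ⟨w, c, hw, hc, hrep⟩ := exists_ridge d K hK a
  have hcard : Fintype.card (Fin (2 * (K + 1) ^ d)) =
      Fintype.card (Bool × (Fin d → Fin (K + 1))) := by simp
  -- Neurons come in pairs: one of each sign for every grid point `J`.
  let e := Fintype.equivOfCardEq hcard
  let s : Bool → ℝ := fun β => if β then 1 else -1
  let σ : Bool → ℝ := fun β => if β then 1 else (-1) ^ K
  have hs : ∀ β, |s β| = 1 := by intro β; cases β <;> simp [s]
  have hσ : ∀ β, |σ β| = 1 := by intro β; cases β <;> simp [σ]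
  set S := B ^ (∑ i ∈ Finset.range L, k ^ (i + 1)) with hS
  have hSpos : 0 < S := pow_pos hB _
  refine ⟨fun p i => B * (s (e p).1 * w (e p).2 i), fun p => B * s (e p).1,
    fun _ => Matrix.diagonal fun _ => B, fun _ _ => 0,
    fun p => S⁻¹ * (c (e p).2 * σ (e p).1), ?_, ?_, ?_, ?_, ?_, ?_⟩
  · intro p i
    rw [abs_mul, abs_mul, hs, one_mul, abs_of_pos hB]
    exact mul_le_of_le_one_right hB.le (hw _ _)
  · intro p
    rw [abs_mul, hs, mul_one, abs_of_pos hB]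
  · intro m _
    refine ⟨fun i j => ?_, fun i => by simpa using hB.le⟩
    change |Matrix.diagonal (fun _ => B) i j| ≤ B
    rw [Matrix.diagonal_apply]
    split_ifs
    · rw [abs_of_pos hB]
    · simpa using hB.le
  · intro p
    rw [abs_mul, abs_mul, hσ, mul_one, abs_of_pos (inv_pos.2 hSpos), mul_assoc]
    exact mul_le_mul_of_nonneg_left (hc _) (inv_pos.2 hSpos).le
  · set W := 2 * (K + 1) ^ d with hW
    have h0 : nnzV (fun _ : Fin W => (0 : ℝ)) = 0 := by simp [nnzV]
    have h1 := nnzM_diagonal_le W (fun _ => B)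
    have h2 : ∑ m ∈ Finset.range (L - 1),
        (nnzM (Matrix.diagonal fun _ : Fin W => B) + nnzV (fun _ : Fin W => (0 : ℝ)))
        ≤ (L - 1) * W := by
      rw [h0, Finset.sum_const, Finset.card_range, smul_eq_mul]
      exact Nat.mul_le_mul_left _ h1
    refine (add_le_add (add_le_add (add_le_add (nnzM_le W d _) (nnzV_le W _)) h2)
      (nnzV_le W _)).trans ?_
    obtain ⟨l, rfl⟩ : ∃ l, L = l + 1 := ⟨L - 1, by omega⟩
    calc W * d + W + (l + 1 - 1) * W + W = (l + 2 + d) * W := by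
          rw [Nat.add_sub_cancel]; ring
      _ ≤ (2 * (l + 1) + d) * W := Nat.mul_le_mul_right _ (by omega)
      _ = _ := by rw [hW]; ring
  · intro x _
    rw [hrep x]
    simp only [deepLayers_diagonal k d _ hk hB.le]
    rw [Nat.sub_add_cancel hL, ← hS, ← hKdef,
      Fintype.sum_equiv e _ (fun q => c q.2 * (σ q.1 *
        relupow K (s q.1 * (∑ i, w q.2 i * x i + 1)))) fun p => by
        have : ∑ i, s (e p).1 * w (e p).2 i * x i + s (e p).1 =
            s (e p).1 * (∑ i, w (e p).2 i * x i + 1) := by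
          rw [mul_add, mul_one, Finset.mul_sum]
          simp only [mul_assoc]
        rw [this]
        field_simp,
      Fintype.sum_prod_type_right]
    refine Finset.sum_congr rfl fun J _ => ?_
    rw [← relupow_add_neg hK, Fintype.sum_bool]
    simp only [s, σ, if_true, one_mul, neg_one_mul, Bool.false_eq_true, if_false]
    ring
end
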